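/- Let Γ be a finitely generated group such that every homomorphism from Γ to a finite group is trivial. Then for every field K and every n ≥ 1, every group homomorphism from Γ to GL(n, K) is trivial. -/

import Mathlib

/-!
Malcev's argument. Since `Γ` is finitely generated, `φ` takes values in `GL (Fin n) R` for a subring
`R` of `K` that is finitely generated as a ring, namely the one generated by the entries of the
images of the generators and of their inverses (`exists_factor_through_finiteType`). If
`φ γ ≠ 1`, some entry `r` of `φ γ - 1` is a nonzero element of `R`. As `R` is a domain of finite
type over the Jacobson ring `ℤ`, its Jacobson radical is zero, so some maximal ideal `m` misses `r`;
the residue field `R ⧸ m` is a field of finite type over `ℤ`, hence finite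
(`finite_of_field_finiteType_int`). Reduction modulo `m` then gives a homomorphism from `Γ` to the
finite group `GL (Fin n) (R ⧸ m)` that does not kill `γ`.
-/

theorem isJacobsonRing_int : IsJacobsonRing ℤ := by
  rw [isJacobsonRing_iff_prime_eq]
  intro P hP
  by_cases h : P = ⊥
  · subst h
    refine le_antisymm (fun x hx => ?_) Ideal.le_jacobson
    -- `x * x + 1` is a unit of `ℤ`, hence equal to `1`.
    have hu := Ideal.mem_jacobson_bot.1 hx x
    rw [Int.isUnit_iff] at hu
    have hx0 : x * x = 0 := by
      rcases hu with hu | hu <;> nlinarith [mul_self_nonneg x]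
    simpa using hx0
  · have := hP.isMaximal h
    exact Ideal.jacobson_eq_self_of_isMaximal

/-- By Zariski's lemma over the Jacobson ring `ℤ`, such a field is module-finite over `ℤ`; it cannot
have characteristic zero because `ℤ` is not a field, so it is finite over a prime field. -/
theorem finite_of_field_finiteType_int (k : Type*) [Field k] [Algebra.FiniteType ℤ k] :
    Finite k := by
  have := isJacobsonRing_int
  have hfin : Module.Finite ℤ k := finite_of_finite_type_of_isJacobsonRing ℤ k
  obtain ⟨p, hp⟩ := CharP.exists k
  rcases CharP.char_is_prime_or_zero k p with hpp | rfl
  · have : Fact p.Prime := ⟨hpp⟩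
    let _ : Algebra (ZMod p) k := ZMod.algebra k p
    have : Module.Finite (ZMod p) k := Module.Finite.of_restrictScalars_finite ℤ (ZMod p) k
    exact Module.finite_of_finite (ZMod p)
  · have : CharZero k := CharP.charP_to_charZero k
    have hint : Algebra.IsIntegral ℤ k := inferInstance
    exact absurd (isField_of_isIntegral_of_isField (R := ℤ) (S := k)
      (FaithfulSMul.algebraMap_injective ℤ k) (Field.toIsField k)) Int.not_isField

/-- A linear representation of a finitely generated group is defined over a subring that is
finitely generated as a ring. -/
theorem exists_factor_through_finiteType {Γ : Type*} [Group Γ] (hfg : Group.FG Γ)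
    {K : Type*} [Field K] {n : ℕ} (φ : Γ →* GL (Fin n) K) :
    ∃ (R : Subalgebra ℤ K) (_ : Algebra.FiniteType ℤ R) (ψ : Γ →* GL (Fin n) R),
      ∀ g, Matrix.GeneralLinearGroup.map R.val.toRingHom (ψ g) = φ g := by
  classical
  obtain ⟨S, hS, hSf⟩ := Group.fg_iff.1 hfg
  let T : Set K := ⋃ s ∈ S, ((Set.range fun ij : Fin n × Fin n => (φ s).val ij.1 ij.2) ∪
    Set.range fun ij : Fin n × Fin n => (φ s)⁻¹.val ij.1 ij.2)
  have hT : T.Finite := hSf.biUnion fun s _ => (Set.finite_range _).union (Set.finite_range _)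
  let R : Subalgebra ℤ K := Algebra.adjoin ℤ T
  have hTR : T ⊆ R := Algebra.subset_adjoin
  let f : GL (Fin n) R →* GL (Fin n) K := Matrix.GeneralLinearGroup.map R.val.toRingHom
  have hf : Function.Injective f := by
    intro a b hab
    ext i j
    exact congrArg (fun M : GL (Fin n) K => M.val i j) hab
  have hrange : ∀ g, φ g ∈ f.range := by
    suffices h : (⊤ : Subgroup Γ) ≤ f.range.comap φ from fun g => h trivial
    rw [← hS, Subgroup.closure_le]
    intro s hs
    have h1 : ∀ i j, (φ s).val i j ∈ R := fun i j =>
      hTR (Set.mem_biUnion hs (Or.inl ⟨(i, j), rfl⟩))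
    have h2 : ∀ i j, (φ s)⁻¹.val i j ∈ R := fun i j =>
      hTR (Set.mem_biUnion hs (Or.inr ⟨(i, j), rfl⟩))
    let A : Matrix (Fin n) (Fin n) R := fun i j => ⟨_, h1 i j⟩
    let B : Matrix (Fin n) (Fin n) R := fun i j => ⟨_, h2 i j⟩
    have hinj : Function.Injective (R.val.toRingHom.mapMatrix (m := Fin n)) :=
      Matrix.map_injective Subtype.val_injective
    have hA : R.val.toRingHom.mapMatrix A = (φ s).val := rfl
    have hB : R.val.toRingHom.mapMatrix B = (φ s)⁻¹.val := rfl
    have hAB : A * B = 1 := hinj (by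
      rw [map_mul, map_one, hA, hB]; exact (φ s).mul_inv)
    have hBA : B * A = 1 := hinj (by
      rw [map_mul, map_one, hA, hB]; exact (φ s).inv_mul)
    exact ⟨⟨A, B, hAB, hBA⟩, Units.ext rfl⟩
  refine ⟨R, ?_, (MonoidHom.ofInjective hf).symm.toMonoidHom.comp (φ.codRestrict f.range hrange),
    fun g => ?_⟩
  · exact Algebra.FiniteType.adjoin_of_finite hT
  · exact congrArg Subtype.val
      ((MonoidHom.ofInjective hf).apply_symm_apply (φ.codRestrict f.range hrange g))

/-- A finitely generated group with no nontrivial finite quotients has no nontrivial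
finite-dimensional linear representations over any field. -/
theorem linear_rep_trivial_of_no_finite_quotients
    (Γ : Type*) [Group Γ] (hfg : Group.FG Γ)
    (hq : ∀ (F : Type) [Group F] [Finite F] (φ : Γ →* F) (γ : Γ), φ γ = 1)
    (K : Type*) [Field K] (n : ℕ) (hn : 1 ≤ n)
    (φ : Γ →* GL (Fin n) K) (γ : Γ) :
    φ γ = 1 := by
  obtain ⟨R, hR, ψ, hψ⟩ := exists_factor_through_finiteType hfg φ
  suffices h : ψ γ = 1 by rw [← hψ, h, map_one]
  have := isJacobsonRing_int
  have hJ : IsJacobsonRing R := isJacobsonRing_of_finiteType (A := ℤ)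
  have hbot : (⊥ : Ideal R).jacobson = ⊥ := hJ.out Ideal.isPrime_bot.isRadical
  refine Units.ext (Matrix.ext fun i j => ?_)
  rw [← sub_eq_zero, ← Ideal.mem_bot, ← hbot, Ideal.jacobson, Ideal.mem_sInf]
  rintro m ⟨-, hm⟩
  let _ : Field (R ⧸ m) := Ideal.Quotient.field m
  have hft : Algebra.FiniteType ℤ (R ⧸ m) :=
    hR.of_surjective (Ideal.Quotient.mk m).toIntAlgHom Ideal.Quotient.mk_surjective
  have hfin : Finite (R ⧸ m) := @finite_of_field_finiteType_int _ _ hft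
  have hGL : Finite (GL (Fin n) (R ⧸ m)) :=
    Finite.of_injective (fun M => M.val) Units.val_injective
  let π : GL (Fin n) R →* GL (Fin n) (R ⧸ m) :=
    Matrix.GeneralLinearGroup.map (Ideal.Quotient.mk m)
  -- `hq` quantifies over groups in `Type`, so the finite group is moved there by `Shrink`.
  let e : GL (Fin n) (R ⧸ m) ≃* Shrink.{0} (GL (Fin n) (R ⧸ m)) := Shrink.mulEquiv.symm
  have : Finite (Shrink.{0} (GL (Fin n) (R ⧸ m))) := Finite.of_equiv _ e.toEquiv
  have h1 : π (ψ γ) = 1 := by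
    have := hq _ ((e.toMonoidHom.comp π).comp ψ) γ
    exact e.map_eq_one_iff.1 this
  rw [← Ideal.Quotient.eq]
  have h2 := congrArg (fun M : GL (Fin n) (R ⧸ m) => M.val i j) h1
  refine Eq.trans h2 ?_
  by_cases hij : i = j <;> simp [hij]
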